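/- Let q̂₁, q̂₂ be positive integers and m₁, m₂ integers, and define 𝔠 = Σ_{β mod q̂₁q̂₂} S(m₁, β; q̂₁) · S(m₂, β; q̂₂), where S(m, n; c) = Σ_{x mod c, gcd(x,c)=1} e((mx + n·x̄)/c) is the Kloosterman sum. Then 𝔠 = 0 unless q̂₁ = q̂₂; and if q̂₁ = q̂₂ = q, then |𝔠| ≤ q² · gcd(q, m₁ − m₂). -/

import Mathlib

open Complex Real

noncomputable def e (x : ℝ) : ℂ := Complex.exp (2 * Real.pi * Complex.I * x)

/-- The Kloosterman sum `S(m,n;c) = Σ_{x mod c, (x,c)=1} e((mx + n·x̄)/c)`, where `x̄` is the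
multiplicative inverse of `x` modulo `c`. -/
noncomputable def kloos (m n : ℤ) (c : ℕ) : ℂ :=
  ∑ x ∈ (Finset.range c).filter (fun x => Nat.gcd x c = 1),
    e (((m : ℝ) * (x : ℝ) + (n : ℝ) * ((((x : ZMod c)⁻¹).val : ℕ) : ℝ)) / (c : ℝ))

/-!
Opening both Kloosterman sums and summing over `β` first, orthogonality keeps only the pairs of
units `u` mod `q₁`, `v` mod `q₂` with `e(ū/q₁) e(v̄/q₂) = 1`. These two factors are roots of unity
of exact orders `q₁` and `q₂`, so there is no such pair unless `q₁ = q₂ = q`, and then `v = -u`.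
What remains is `q²` times the Ramanujan sum `c_q(m₁ - m₂)`, which Hölder's formula
`c_q(m) = φ(q) / φ(d) * μ(d)` with `d = q / (q, m)` bounds by `φ(q) / φ(d) ≤ q / d = (q, m)`.
-/

open Finset (range univ)
open Polynomial (nthRootsFinset mem_nthRootsFinset)
open ZMod (stdAddChar)
open scoped Nat ArithmeticFunction.Moebius

theorem totient_mul_le (k n : ℕ) : φ (k * n) ≤ k * φ n := by
  induction k using induction_on_primes with
  | zero => simp
  | one => simp
  | prime_mul p k hp ih =>
    have totient_prime_mul_le (m : ℕ) : φ (p * m) ≤ p * φ m := by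
      by_cases hpm : p ∣ m
      · exact (Nat.totient_mul_of_prime_of_dvd hp hpm).le
      · rw [Nat.totient_mul_of_prime_of_not_dvd hp hpm]
        exact Nat.mul_le_mul_right _ (Nat.sub_le p 1)
    calc φ (p * k * n) ≤ p * φ (k * n) := mul_assoc p k n ▸ totient_prime_mul_le (k * n)
      _ ≤ p * (k * φ n) := Nat.mul_le_mul_left p ih
      _ = p * k * φ n := (mul_assoc p k (φ n)).symm

theorem totient_div_totient_le_div {d n : ℕ} (h : d ∣ n) : φ n / φ d ≤ n / d := by
  refine Nat.div_le_of_le_mul ?_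
  calc φ n = φ (n / d * d) := by rw [Nat.div_mul_cancel h]
    _ ≤ n / d * φ d := totient_mul_le _ _
    _ = φ d * (n / d) := mul_comm _ _

theorem sum_comp_monoidHom_of_surjective {G H M : Type*} [Group G] [Group H] [Fintype G] [Fintype H]
    [AddCommMonoid M] (f : G →* H) (hf : Function.Surjective f) (g : H → M) :
    ∑ x, g (f x) = (Fintype.card G / Fintype.card H) • ∑ y, g y := by
  classical
  have card_fiber (y : H) : (univ.filter (f · = y)).card = (univ.filter (f · = 1)).card :=
    MonoidHom.card_fiber_eq_of_mem_range f (hf y) (hf 1)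
  have card_eq : Fintype.card G = Fintype.card H * (univ.filter (f · = 1)).card := by
    rw [← Finset.card_univ,
      Finset.card_eq_sum_card_fiberwise (t := univ) fun x _ => Finset.mem_univ (f x)]
    simp only [card_fiber, Finset.sum_const, Finset.card_univ, smul_eq_mul]
  rw [card_eq, Nat.mul_div_cancel_left _ Fintype.card_pos, ← Finset.sum_fiberwise univ f,
    Finset.smul_sum]
  refine Finset.sum_congr rfl fun y _ => ?_
  rw [← card_fiber y, ← Finset.sum_const]
  exact Finset.sum_congr rfl fun x hx => by rw [(Finset.mem_filter.1 hx).2]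

theorem sum_filter_gcd_eq_one_eq_sum_units {M : Type*} [AddCommMonoid M] {q : ℕ} [NeZero q]
    (f : ℕ → M) :
    ∑ x ∈ (range q).filter (fun x => Nat.gcd x q = 1), f x
      = ∑ u : (ZMod q)ˣ, f (u : ZMod q).val := by
  refine (Finset.sum_bij (fun (u : (ZMod q)ˣ) _ => (u : ZMod q).val) (fun u _ => ?_)
    (fun u _ v _ huv => ?_) (fun x hx => ?_) fun _ _ => rfl).symm
  · rw [Finset.mem_filter, Finset.mem_range]
    exact ⟨ZMod.val_lt _, ZMod.val_coe_unit_coprime u⟩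
  · exact Units.ext (ZMod.val_injective q huv)
  · rw [Finset.mem_filter, Finset.mem_range] at hx
    refine ⟨ZMod.unitOfCoprime x hx.2, Finset.mem_univ _, ?_⟩
    rw [ZMod.coe_unitOfCoprime, ZMod.val_natCast, Nat.mod_eq_of_lt hx.1]

section RootsOfUnity

variable {R : Type*} [CommRing R] [IsDomain R] {ζ : R} {n : ℕ}

theorem sum_range_pow_of_pow_eq_one [DecidableEq R] (h : ζ ^ n = 1) :
    ∑ i ∈ range n, ζ ^ i = if ζ = 1 then (n : R) else 0 := by
  split_ifs with hζ
  · simp [hζ]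
  · have : (1 - ζ) * ∑ i ∈ range n, ζ ^ i = 0 := by rw [mul_neg_geom_sum, h, sub_self]
    exact (mul_eq_zero.1 this).resolve_left (sub_ne_zero.2 (Ne.symm hζ))

theorem sum_nthRootsFinset_one (hζ : IsPrimitiveRoot ζ n) :
    ∑ z ∈ nthRootsFinset n (1 : R), z = if n = 1 then 1 else 0 := by
  classical
  obtain rfl | hn := n.eq_zero_or_pos
  · simp
  have sum_eq : ∑ z ∈ nthRootsFinset n (1 : R), z = ∑ i ∈ range n, ζ ^ i := by
    refine (Finset.sum_bij (fun i _ => ζ ^ i) (fun i _ => ?_) (fun i hi j hj hij => ?_)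
      (fun z hz => ?_) fun _ _ => rfl).symm
    · rw [mem_nthRootsFinset hn, ← pow_mul, mul_comm, pow_mul, hζ.pow_eq_one, one_pow]
    · exact hζ.pow_inj (Finset.mem_range.1 hi) (Finset.mem_range.1 hj) hij
    · have : NeZero n := ⟨hn.ne'⟩
      obtain ⟨i, hi, rfl⟩ := hζ.eq_pow_of_pow_eq_one ((mem_nthRootsFinset hn _).1 hz)
      exact ⟨i, Finset.mem_range.2 hi, rfl⟩
  rw [sum_eq]
  split_ifs with h1
  · simp [h1]
  · exact hζ.geom_sum_eq_zero (by omega)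

theorem sum_primitiveRoots_eq_moebius (hζ : IsPrimitiveRoot ζ n) :
    ∑ z ∈ primitiveRoots n R, z = (μ n : R) := by
  classical
  obtain rfl | hn := n.eq_zero_or_pos
  · simp
  have sum_divisors : ∀ m > 0, m ∈ {m | m ∣ n} →
      ∑ d ∈ m.divisors, ∑ z ∈ primitiveRoots d R, z = if m = 1 then 1 else 0 := by
    rintro m - ⟨k, rfl⟩
    have hζk : IsPrimitiveRoot (ζ ^ k) m := hζ.pow hn (mul_comm m k)
    rw [← Finset.sum_biUnion fun a _ b _ hab => IsPrimitiveRoot.disjoint hab,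
      ← IsPrimitiveRoot.nthRoots_one_eq_biUnion_primitiveRoots, sum_nthRootsFinset_one hζk]
  have inversion := (ArithmeticFunction.sum_eq_iff_sum_mul_moebius_eq_on {m | m ∣ n}
    fun _ _ => dvd_trans).1 sum_divisors n hn dvd_rfl
  rw [← inversion, Finset.sum_eq_single (n, 1)]
  · simp
  · rintro ⟨a, b⟩ hab hne
    have : b ≠ 1 := by
      rintro rfl
      exact hne (by simpa using (Nat.mem_divisorsAntidiagonal.1 hab).1)
    simp [this]
  · exact fun h => absurd (by simp [hn.ne']) h

theorem sum_units_pow_val [NeZero n] (hζ : IsPrimitiveRoot ζ n) :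
    ∑ u : (ZMod n)ˣ, ζ ^ (u : ZMod n).val = (μ n : R) := by
  rw [← sum_primitiveRoots_eq_moebius hζ, ← sum_filter_gcd_eq_one_eq_sum_units (ζ ^ ·)]
  refine Finset.sum_bij (fun x _ => ζ ^ x) (fun x hx => ?_) (fun x hx y hy hxy => ?_)
    (fun z hz => ?_) fun _ _ => rfl
  · rw [mem_primitiveRoots (NeZero.pos n)]
    exact hζ.pow_of_coprime x (Finset.mem_filter.1 hx).2
  · rw [Finset.mem_filter, Finset.mem_range] at hx hy
    exact hζ.pow_inj hx.1 hy.1 hxy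
  · rw [mem_primitiveRoots (NeZero.pos n), hζ.isPrimitiveRoot_iff] at hz
    obtain ⟨x, hx, hcop, hxz⟩ := hz
    exact ⟨x, Finset.mem_filter.2 ⟨Finset.mem_range.2 hx, hcop⟩, hxz⟩

theorem sum_units_pow_val_of_dvd {q : ℕ} [NeZero q] (h : n ∣ q) (hζ : IsPrimitiveRoot ζ n) :
    ∑ u : (ZMod q)ˣ, ζ ^ (u : ZMod q).val = (φ q / φ n : ℕ) * (μ n : R) := by
  have : NeZero n := ⟨ne_zero_of_dvd_ne_zero (NeZero.ne q) h⟩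
  have pow_val (u : (ZMod q)ˣ) :
      ζ ^ (u : ZMod q).val = ζ ^ (ZMod.unitsMap h u : ZMod n).val := by
    rw [ZMod.unitsMap_val, ZMod.cast_eq_val, ZMod.val_natCast, hζ.eq_orderOf, pow_mod_orderOf]
  simp only [pow_val]
  rw [sum_comp_monoidHom_of_surjective (ZMod.unitsMap h) (ZMod.unitsMap_surjective h)
    (fun v => ζ ^ (v : ZMod n).val), sum_units_pow_val hζ, ZMod.card_units_eq_totient,
    ZMod.card_units_eq_totient, nsmul_eq_mul]

end RootsOfUnity

section StdAddChar

variable {q : ℕ} [NeZero q]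

theorem stdAddChar_natCast_mul (k : ℕ) (a : ZMod q) :
    stdAddChar ((k : ZMod q) * a) = (stdAddChar a : ℂ) ^ k := by
  rw [← nsmul_eq_mul, AddChar.map_nsmul_eq_pow]

theorem orderOf_stdAddChar (a : ZMod q) : orderOf (stdAddChar a : ℂ) = addOrderOf a :=
  (orderOf_injective (stdAddChar (N := q)).toMonoidHom ZMod.injective_stdAddChar
    (Multiplicative.ofAdd a)).trans (orderOf_ofAdd_eq_addOrderOf a)

theorem addOrderOf_intCast (m : ℤ) : addOrderOf (m : ZMod q) = q / Int.gcd q m := by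
  have addOrderOf_natAbs : addOrderOf (m.natAbs : ZMod q) = q / Int.gcd q m :=
    ZMod.addOrderOf_coe _ (NeZero.ne q)
  obtain hm | hm := m.natAbs_eq
  · rw [← addOrderOf_natAbs, hm, Int.cast_natCast, Int.natAbs_natCast]
  · rw [← addOrderOf_natAbs, hm, Int.cast_neg, Int.cast_natCast, addOrderOf_neg, Int.natAbs_neg,
      Int.natAbs_natCast]

theorem addOrderOf_coe_unit (u : (ZMod q)ˣ) : addOrderOf (u : ZMod q) = q := by
  rw [← ZMod.natCast_zmod_val (u : ZMod q), ZMod.addOrderOf_coe _ (NeZero.ne q),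
    (ZMod.val_coe_unit_coprime u).symm.gcd_eq_one, Nat.div_one]

theorem eq_of_stdAddChar_mul_stdAddChar_eq_one {q₁ q₂ : ℕ} [NeZero q₁] [NeZero q₂]
    {u : (ZMod q₁)ˣ} {v : (ZMod q₂)ˣ}
    (h : stdAddChar (u : ZMod q₁) * stdAddChar (v : ZMod q₂) = (1 : ℂ)) : q₁ = q₂ := by
  have char_eq : (stdAddChar (u : ZMod q₁) : ℂ) = stdAddChar ((-v : (ZMod q₂)ˣ) : ZMod q₂) := by
    rw [Units.val_neg, AddChar.map_neg_eq_inv]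
    exact eq_inv_of_mul_eq_one_left h
  rw [← addOrderOf_coe_unit u, ← orderOf_stdAddChar, char_eq, orderOf_stdAddChar,
    addOrderOf_coe_unit]

theorem stdAddChar_mul_stdAddChar_eq_one_iff {a b : ZMod q} :
    stdAddChar a * stdAddChar b = (1 : ℂ) ↔ a = -b := by
  rw [← AddChar.map_add_eq_mul, ← (stdAddChar (N := q)).map_zero_eq_one,
    ZMod.injective_stdAddChar.eq_iff, add_eq_zero_iff_eq_neg]

theorem sum_range_stdAddChar_mul_stdAddChar {q₁ q₂ : ℕ} [NeZero q₁] [NeZero q₂]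
    (a : ZMod q₁) (b : ZMod q₂) :
    ∑ β ∈ range (q₁ * q₂), (stdAddChar ((β : ZMod q₁) * a) * stdAddChar ((β : ZMod q₂) * b) : ℂ) =
      if stdAddChar a * stdAddChar b = (1 : ℂ) then (q₁ * q₂ : ℂ) else 0 := by
  have pow_eq_one : (stdAddChar a * stdAddChar b : ℂ) ^ (q₁ * q₂) = 1 := by
    rw [mul_pow, ← stdAddChar_natCast_mul, ← stdAddChar_natCast_mul]
    simp
  simp only [stdAddChar_natCast_mul, ← mul_pow]
  rw [sum_range_pow_of_pow_eq_one pow_eq_one, Nat.cast_mul]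

end StdAddChar

section RamanujanSum

variable {q : ℕ} [NeZero q]

/-- The Ramanujan sum `c_q(a) = Σ_{u mod q, (u,q)=1} e(au/q)`, with `a` a residue class. -/
noncomputable def ramanujanSum (a : ZMod q) : ℂ :=
  ∑ u : (ZMod q)ˣ, stdAddChar (a * (u : ZMod q))

theorem ramanujanSum_eq_totient_div_mul_moebius (a : ZMod q) :
    ramanujanSum a = (φ q / φ (addOrderOf a) : ℕ) * μ (addOrderOf a) := by
  have char_mul (u : (ZMod q)ˣ) :
      (stdAddChar (a * (u : ZMod q)) : ℂ) = stdAddChar a ^ (u : ZMod q).val := by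
    rw [← stdAddChar_natCast_mul, ZMod.natCast_zmod_val, mul_comm]
  have hdvd : addOrderOf a ∣ q := by
    rw [addOrderOf_dvd_iff_nsmul_eq_zero, nsmul_eq_mul, CharP.cast_eq_zero, zero_mul]
  have hprim : IsPrimitiveRoot (stdAddChar a : ℂ) (addOrderOf a) :=
    orderOf_stdAddChar a ▸ IsPrimitiveRoot.orderOf _
  simp only [ramanujanSum, char_mul]
  exact sum_units_pow_val_of_dvd hdvd hprim

theorem norm_ramanujanSum_intCast_le (m : ℤ) : ‖ramanujanSum (m : ZMod q)‖ ≤ Int.gcd q m := by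
  have hdvd : Int.gcd q m ∣ q := Nat.gcd_dvd_left q m.natAbs
  have norm_moebius_le : ‖(μ (q / Int.gcd q m) : ℂ)‖ ≤ 1 := by
    rw [Complex.norm_intCast]
    exact_mod_cast ArithmeticFunction.abs_moebius_le_one
  rw [ramanujanSum_eq_totient_div_mul_moebius, addOrderOf_intCast, norm_mul, Complex.norm_natCast]
  calc ((φ q / φ (q / Int.gcd q m) : ℕ) : ℝ) * ‖(μ (q / Int.gcd q m) : ℂ)‖
      ≤ (φ q / φ (q / Int.gcd q m) : ℕ) :=
        mul_le_of_le_one_right (Nat.cast_nonneg _) norm_moebius_le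
    _ ≤ (q / (q / Int.gcd q m) : ℕ) :=
        Nat.cast_le.2 (totient_div_totient_le_div (Nat.div_dvd_of_dvd hdvd))
    _ = Int.gcd q m := by rw [Nat.div_div_self hdvd (NeZero.ne q)]

end RamanujanSum

section Kloosterman

theorem e_intCast_div (a : ℤ) (c : ℕ) [NeZero c] : e (a / c) = stdAddChar (a : ZMod c) := by
  rw [ZMod.stdAddChar_coe, e]
  congr 1
  push_cast
  ring

theorem kloos_eq_sum_units (m n : ℤ) (c : ℕ) [NeZero c] :
    kloos m n c = ∑ u : (ZMod c)ˣ,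
      stdAddChar ((m : ZMod c) * (u : ZMod c)) *
        stdAddChar ((n : ZMod c) * ((u⁻¹ : (ZMod c)ˣ) : ZMod c)) := by
  rw [kloos, sum_filter_gcd_eq_one_eq_sum_units (fun x => e (((m : ℝ) * (x : ℝ) +
    (n : ℝ) * ((((x : ZMod c)⁻¹).val : ℕ) : ℝ)) / (c : ℝ)))]
  refine Finset.sum_congr rfl fun u _ => ?_
  have cast_eq := e_intCast_div (m * (u : ZMod c).val + n * ((u : ZMod c)⁻¹).val) c
  push_cast [ZMod.natCast_zmod_val] at cast_eq
  rw [ZMod.natCast_zmod_val, cast_eq, ← AddChar.map_add_eq_mul, ZMod.inv_coe_unit]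

theorem sum_kloos_mul_kloos (q₁ q₂ : ℕ) [NeZero q₁] [NeZero q₂] (m₁ m₂ : ℤ) :
    ∑ β ∈ range (q₁ * q₂), kloos m₁ (β : ℤ) q₁ * kloos m₂ (β : ℤ) q₂ =
      ∑ u : (ZMod q₁)ˣ, ∑ v : (ZMod q₂)ˣ,
        stdAddChar ((m₁ : ZMod q₁) * (u : ZMod q₁)) * stdAddChar ((m₂ : ZMod q₂) * (v : ZMod q₂)) *
          if stdAddChar ((u⁻¹ : (ZMod q₁)ˣ) : ZMod q₁) *
            stdAddChar ((v⁻¹ : (ZMod q₂)ˣ) : ZMod q₂) = (1 : ℂ) then (q₁ * q₂ : ℂ) else 0 := by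
  simp only [kloos_eq_sum_units, Finset.sum_mul_sum, Int.cast_natCast]
  rw [Finset.sum_comm]
  refine Finset.sum_congr rfl fun u _ => ?_
  rw [Finset.sum_comm]
  refine Finset.sum_congr rfl fun v _ => ?_
  rw [← sum_range_stdAddChar_mul_stdAddChar, Finset.mul_sum]
  exact Finset.sum_congr rfl fun β _ => mul_mul_mul_comm _ _ _ _

theorem sum_kloos_mul_kloos_of_ne {q₁ q₂ : ℕ} [NeZero q₁] [NeZero q₂] (h : q₁ ≠ q₂) (m₁ m₂ : ℤ) :
    ∑ β ∈ range (q₁ * q₂), kloos m₁ (β : ℤ) q₁ * kloos m₂ (β : ℤ) q₂ = 0 := by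
  rw [sum_kloos_mul_kloos]
  refine Finset.sum_eq_zero fun u _ => Finset.sum_eq_zero fun v _ => ?_
  rw [if_neg (mt eq_of_stdAddChar_mul_stdAddChar_eq_one h), mul_zero]

theorem sum_kloos_mul_kloos_self (q : ℕ) [NeZero q] (m₁ m₂ : ℤ) :
    ∑ β ∈ range (q * q), kloos m₁ (β : ℤ) q * kloos m₂ (β : ℤ) q =
      (q : ℂ) ^ 2 * ramanujanSum ((m₁ - m₂ : ℤ) : ZMod q) := by
  rw [sum_kloos_mul_kloos, ramanujanSum, Finset.mul_sum]
  refine Finset.sum_congr rfl fun u _ => ?_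
  have inv_eq_neg_inv_iff (v : (ZMod q)ˣ) :
      ((u⁻¹ : (ZMod q)ˣ) : ZMod q) = -((v⁻¹ : (ZMod q)ˣ) : ZMod q) ↔ v = -u := by
    rw [← Units.val_neg, Units.val_inj, ← inv_neg, inv_inj, eq_comm, neg_eq_iff_eq_neg]
  simp only [stdAddChar_mul_stdAddChar_eq_one_iff, inv_eq_neg_inv_iff, mul_ite, mul_zero,
    Finset.sum_ite_eq', Finset.mem_univ, if_true]
  rw [← AddChar.map_add_eq_mul, mul_comm, ← pow_two]
  congr 2
  push_cast
  ring

end Kloosterman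

/-- Diagonal case of the character sum: `𝔠 = Σ_{β mod q̂₁q̂₂} S(m₁,β;q̂₁) S(m₂,β;q̂₂)`
vanishes unless `q̂₁ = q̂₂`, and if `q̂₁ = q̂₂ = q` then `|𝔠| ≤ q² (q, m₁ − m₂)`. -/
theorem stmt10 (q₁ q₂ : ℕ) (h₁ : 0 < q₁) (h₂ : 0 < q₂) (m₁ m₂ : ℤ) :
    (q₁ ≠ q₂ →
      ∑ β ∈ Finset.range (q₁ * q₂), kloos m₁ (β : ℤ) q₁ * kloos m₂ (β : ℤ) q₂ = 0) ∧
    (q₁ = q₂ →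
      ‖∑ β ∈ Finset.range (q₁ * q₂), kloos m₁ (β : ℤ) q₁ * kloos m₂ (β : ℤ) q₂‖ ≤
        (q₁ : ℝ) ^ 2 * ((Int.gcd (q₁ : ℤ) (m₁ - m₂) : ℕ) : ℝ)) := by
  have : NeZero q₁ := ⟨h₁.ne'⟩
  have : NeZero q₂ := ⟨h₂.ne'⟩
  refine ⟨fun hne => sum_kloos_mul_kloos_of_ne hne m₁ m₂, ?_⟩
  rintro rfl
  rw [sum_kloos_mul_kloos_self, norm_mul, norm_pow, Complex.norm_natCast]
  gcongr
  exact norm_ramanujanSum_intCast_le (m₁ - m₂)
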